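/- Let $\mathcal{C}$ be an abelian category with enough injectives and $X$ an exact, locally nilpotent endofunctor preserving injectives. If $I \in \mathcal{C}$ is injective and $\mathsf{M} \in \operatorname{Mono}(X)$, then $\operatorname{Ext}^i_{\mathcal{C}^{T(X)}}(\mathsf{M}, f_!(I)) = 0$ for all $i > 0$. In particular, $f_!(I)$ is injective in the exact category $\operatorname{Mono}(X)$. -/

import Mathlib

open CategoryTheory Limits

universe w v u

variable {C : Type u} [Category.{v} C]

/-- The power `X^n` of an endofunctor, with `X^(n+1) = X^n ⋙ X`. -/
def fpow (X : C ⥤ C) : ℕ → (C ⥤ C)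
  | 0 => 𝟭 C
  | n + 1 => fpow X n ⋙ X

/-- `X` is locally nilpotent if every object is annihilated by some power of `X`. -/
def LocallyNilpotent (X : C ⥤ C) : Prop :=
  ∀ M : C, ∃ n : ℕ, IsZero ((fpow X n).obj M)

/-- The category `(X ⇓ Id)` of `X`-modules, identified with the Eilenberg–Moore category
of the free monad on `X`. -/
structure XMod (X : C ⥤ C) : Type max u v where
  carrier : C
  str : X.obj carrier ⟶ carrier

/-- Morphisms of `X`-modules. -/
@[ext]
structure XModHom {X : C ⥤ C} (M N : XMod X) : Type v where
  hom : M.carrier ⟶ N.carrier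
  comm : M.str ≫ hom = X.map hom ≫ N.str

instance (X : C ⥤ C) : Category (XMod X) where
  Hom := XModHom
  id M := ⟨𝟙 M.carrier, by simp⟩
  comp f g := ⟨f.hom ≫ g.hom, by
    rw [← Category.assoc, f.comm, Category.assoc, g.comm, ← Category.assoc, ← Functor.map_comp]⟩
  id_comp f := by apply XModHom.ext; simp [CategoryStruct.id, CategoryStruct.comp]
  comp_id f := by apply XModHom.ext; simp [CategoryStruct.id, CategoryStruct.comp]
  assoc f g h := by apply XModHom.ext; simp [CategoryStruct.comp]

@[simp] lemma XMod.id_hom {X : C ⥤ C} (M : XMod X) : (𝟙 M : XModHom M M).hom = 𝟙 M.carrier := rfl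
@[simp] lemma XMod.comp_hom {X : C ⥤ C} {M N P : XMod X} (f : M ⟶ N) (g : N ⟶ P) :
    (f ≫ g).hom = f.hom ≫ g.hom := rfl

/-- `F` is the free `X`-module `f₁(N)` on `N`, encoded via the universal
property of the free–forgetful adjunction `f₁ ⊣ f⋆`. -/
structure IsFreeXModOn (X : C ⥤ C) (F : XMod X) (N : C) where
  unit : N ⟶ F.carrier
  lift : ∀ (P : XMod X), (N ⟶ P.carrier) → (F ⟶ P)
  fac : ∀ (P : XMod X) (g : N ⟶ P.carrier), unit ≫ (lift P g).hom = g
  uniq : ∀ (P : XMod X) (g : N ⟶ P.carrier) (k : F ⟶ P), unit ≫ k.hom = g → k = lift P g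

/-!
`Mono(X)` is a resolving subcategory of the category of `X`-modules: it is closed under submodules,
and every module is a quotient of a free one, whose structure map `X F ⟶ N ⊞ X F ≅ F` is monic
(free modules exist because `X` is locally nilpotent). By dimension shifting it suffices to extend
morphisms into `F = f₁(I)` along a short exact sequence `0 ⟶ K ⟶ P ⟶ M ⟶ 0` of modules with
`M ∈ Mono(X)`. The carrier of `F` is injective, so the morphism extends in `C`; the failure of the
extension to be `X`-linear factors through a morphism `X M ⟶ F`, and as `X M ⟶ M` is monic it can be
corrected on `M`, at the cost of an error passing through `X F`, then `X² F`, and so on, which local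
nilpotence brings to an end.
-/

section Resolving

open Abelian

variable {A : Type u} [Category.{v} A] [Abelian A]

lemma exists_epi_lift_single_of_quasiIsoAt {ι : Type*} [DecidableEq ι] {c : ComplexShape ι}
    {K : HomologicalComplex A c} {M : A} {i : ι}
    (s : K ⟶ (HomologicalComplex.single A c i).obj M) [QuasiIsoAt s i] :
    ∃ (M' : A) (p : M' ⟶ M) (_ : Epi p) (σ : (HomologicalComplex.single A c i).obj M' ⟶ K),
      σ ≫ s = (HomologicalComplex.single A c i).map p := by
  obtain ⟨M', p, hp, z, hz, y, fac⟩ :=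
    (HomologicalComplex.epi_homologyMap_iff_up_to_refinements s _ i _ rfl rfl).1 inferInstance
      (HomologicalComplex.singleObjXSelf c i M).inv (by simp)
  refine ⟨M', p, hp, HomologicalComplex.mkHomFromSingle z ?_, ?_⟩
  · rintro j hij
    obtain rfl := c.next_eq' hij
    exact hz
  · apply HomologicalComplex.from_single_hom_ext
    simpa [HomologicalComplex.single_map_f_self] using fac.symm

lemma exists_epi_Q_map_single_map_comp_eq_zero [HasDerivedCategory.{w} A] {M : A}
    {L : CochainComplex A ℤ} {i : ℤ} (hL : IsZero (L.X i))
    (φ : DerivedCategory.Q.obj ((HomologicalComplex.single A _ i).obj M) ⟶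
      DerivedCategory.Q.obj L) :
    ∃ (M' : A) (p : M' ⟶ M), Epi p ∧
      DerivedCategory.Q.map ((HomologicalComplex.single A _ i).map p) ≫ φ = 0 := by
  obtain ⟨K, s, hs, g, rfl⟩ := DerivedCategory.right_fac φ
  have : QuasiIso s := (DerivedCategory.isIso_Q_map_iff_quasiIso A s).1 hs
  obtain ⟨M', p, hp, σ, hσ⟩ := exists_epi_lift_single_of_quasiIsoAt s
  have hσg : σ ≫ g = 0 := HomologicalComplex.from_single_hom_ext (hL.eq_of_tgt _ _)
  refine ⟨M', p, hp, ?_⟩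
  rw [← hσ, Functor.map_comp, Category.assoc, IsIso.hom_inv_id_assoc, ← Functor.map_comp, hσg,
    Functor.map_zero]

variable [HasExt.{w} A]

lemma exists_epi_mk₀_comp_eq_zero {M Y : A} {n : ℕ} (e : Ext M Y (n + 1)) :
    ∃ (M' : A) (p : M' ⟶ M), Epi p ∧ (Ext.mk₀ p).comp e (zero_add _) = 0 := by
  let := HasDerivedCategory.standard A
  let shift := ((DerivedCategory.singleFunctors A).shiftIso (n + 1) (-(n + 1)) 0 (by lia)).app Y
  obtain ⟨M', p, hp, hpe⟩ := exists_epi_Q_map_single_map_comp_eq_zero (i := 0)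
    (L := (CochainComplex.singleFunctor A (-(n + 1))).obj Y)
    (HomologicalComplex.isZero_single_obj_X _ _ _ _ (by lia)) (e.hom ≫ shift.hom)
  refine ⟨M', p, hp, Ext.ext ?_⟩
  rw [← cancel_mono shift.hom, Ext.zero_hom, zero_comp, ← Ext.singleFunctor_map_comp_hom,
    Category.assoc]
  exact hpe

lemma exists_extClass_comp_eq {P : ObjectProperty A}
    (exists_cover : ∀ N : A, ∃ (N' : A) (p : N' ⟶ N), Epi p ∧ P N')
    {M Y : A} {n : ℕ} (e : Ext M Y (n + 1)) :
    ∃ (K N : A) (i : K ⟶ N) (p : N ⟶ M) (w : i ≫ p = 0)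
      (hS : (ShortComplex.mk i p w).ShortExact) (y : Ext K Y n),
      P N ∧ hS.extClass.comp y (add_comm 1 n) = e := by
  obtain ⟨M', p, hp, hpe⟩ := exists_epi_mk₀_comp_eq_zero e
  obtain ⟨N, q, hq, hN⟩ := exists_cover M'
  have hqpe : (Ext.mk₀ (q ≫ p)).comp e (zero_add _) = 0 := by
    rw [← Ext.mk₀_comp_mk₀_assoc, hpe, Ext.comp_zero]
  have hS : (ShortComplex.mk _ (q ≫ p) (kernel.condition _)).ShortExact :=
    .mk' (ShortComplex.exact_of_f_is_kernel _ (kernelIsKernel _))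
      (inferInstanceAs (Mono (kernel.ι _))) (epi_comp q p)
  obtain ⟨y, hy⟩ := Ext.contravariant_sequence_exact₃ hS Y e hqpe (add_comm 1 n)
  exact ⟨_, N, _, _, _, hS, y, hN, hy⟩

theorem subsingleton_ext_of_resolving {P : ObjectProperty A} {Y : A}
    (exists_cover : ∀ N : A, ∃ (N' : A) (p : N' ⟶ N), Epi p ∧ P N')
    (prop_kernel : ∀ S : ShortComplex A, S.ShortExact → P S.X₂ → P S.X₃ → P S.X₁)
    (exists_extension : ∀ S : ShortComplex A, S.ShortExact → P S.X₁ → P S.X₂ → P S.X₃ →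
      ∀ g : S.X₁ ⟶ Y, ∃ h : S.X₂ ⟶ Y, S.f ≫ h = g)
    {M : A} (hM : P M) (n : ℕ) : Subsingleton (Ext M Y (n + 1)) := by
  refine subsingleton_of_forall_eq 0 fun e ↦ ?_
  induction n generalizing M with
  | zero =>
    obtain ⟨K, N, i, p, w, hS, y, hN, rfl⟩ := exists_extClass_comp_eq exists_cover e
    obtain ⟨g, rfl⟩ := (Ext.mk₀_bijective _ _).2 y
    obtain ⟨h, rfl⟩ := exists_extension _ hS (prop_kernel _ hS hN hM) hN hM g
    rw [← Ext.mk₀_comp_mk₀, hS.extClass_comp_assoc]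
  | succ n ih =>
    obtain ⟨K, N, i, p, w, hS, y, hN, rfl⟩ := exists_extClass_comp_eq exists_cover e
    rw [ih (prop_kernel _ hS hN hM) y, Ext.comp_zero]

end Resolving

lemma exists_map_g_comp_eq {A B : Type*} [Category* A] [Abelian A] [Category* B] [Abelian B]
    (G : A ⥤ B) [G.PreservesZeroMorphisms] [PreservesFiniteColimits G] {S : ShortComplex A}
    (hS : S.Exact) [Epi S.g] {Z : B} (k : G.obj S.X₂ ⟶ Z) (hk : G.map S.f ≫ k = 0) :
    ∃ d : G.obj S.X₃ ⟶ Z, G.map S.g ≫ d = k := by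
  have hGS : (S.map G).Exact := hS.map_of_epi_of_preservesCokernel G ‹_› inferInstance
  have : Epi (S.map G).g := inferInstanceAs (Epi (G.map S.g))
  exact ⟨hGS.desc k hk, hGS.g_desc k hk⟩

namespace XMod

variable {X : C ⥤ C}

lemma hom_ext {M N : XMod X} {f g : M ⟶ N} (h : f.hom = g.hom) : f = g :=
  XModHom.ext h

lemma hom_comm {M N : XMod X} (f : M ⟶ N) : M.str ≫ f.hom = X.map f.hom ≫ N.str :=
  XModHom.comm f

variable (X) in
/-- The forgetful functor `f⋆` from `X`-modules to the base category. -/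
@[simps]
def forget : XMod X ⥤ C where
  obj M := M.carrier
  map f := f.hom

instance : (forget X).Faithful where
  map_injective := hom_ext

variable (X) in
/-- `Mono(X)`: the `X`-modules with monic structure map. -/
def monoStr : ObjectProperty (XMod X) := fun M ↦ Mono M.str

lemma monoStr_of_mono [X.PreservesMonomorphisms] {K P : XMod X} (i : K ⟶ P) [Mono i.hom]
    (hP : monoStr X P) : monoStr X K := by
  have : Mono P.str := hP
  have : Mono (K.str ≫ i.hom) := hom_comm i ▸ inferInstance
  exact mono_of_mono K.str i.hom

end XMod

lemma fpow_succ_obj (X : C ⥤ C) (n : ℕ) (N : C) :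
    (fpow X (n + 1)).obj N = (fpow X n).obj (X.obj N) := by
  induction n with
  | zero => rfl
  | succ n ih => exact congrArg X.obj ih

instance injective_fpow_obj (X : C ⥤ C) [X.PreservesInjectiveObjects] (I : C) [Injective I] :
    ∀ n, Injective ((fpow X n).obj I)
  | 0 => ‹_›
  | n + 1 => Functor.PreservesInjectiveObjects.injective_obj (F := X) (injective_fpow_obj X I n)

instance additive_fpow [Preadditive C] (X : C ⥤ C) [X.Additive] : ∀ n, (fpow X n).Additive
  | 0 => inferInstanceAs (𝟭 C).Additive
  | n + 1 => have := additive_fpow X n; inferInstanceAs (fpow X n ⋙ X).Additive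

namespace IsFreeXModOn

variable {X : C ⥤ C}

lemma hom_ext {F P : XMod X} {N : C} (hF : IsFreeXModOn X F N) {f g : F ⟶ P}
    (h : hF.unit ≫ f.hom = hF.unit ≫ g.hom) : f = g :=
  (hF.uniq P _ f h).trans (hF.uniq P _ g rfl).symm

lemma epi_lift_id (M : XMod X) {F : XMod X} (hF : IsFreeXModOn X F M.carrier) :
    Epi (hF.lift M (𝟙 _)) :=
  (XMod.forget X).epi_of_epi_map (SplitEpi.epi ⟨hF.unit, hF.fac M _⟩)

section Lambek

variable [HasZeroMorphisms C] [HasBinaryBiproducts C]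

/-- Lambek's lemma for the functor `Y ↦ N ⊞ X Y`, whose initial algebra is the free module. -/
noncomputable def biprodIso {F : XMod X} {N : C} (hF : IsFreeXModOn X F N) :
    N ⊞ X.obj F.carrier ≅ F.carrier :=
  let P : XMod X := ⟨N ⊞ X.obj F.carrier, X.map (biprod.desc hF.unit F.str) ≫ biprod.inr⟩
  let l : P ⟶ F := ⟨biprod.desc hF.unit F.str, by simp [P]⟩
  let k : F ⟶ P := hF.lift P biprod.inl
  have hkl : k ≫ l = 𝟙 F := hF.hom_ext (by simp [k, l, P, reassoc_of% hF.fac])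
  { hom := l.hom
    inv := k.hom
    hom_inv_id := by
      apply biprod.hom_ext'
      · simp [l, k, hF.fac]
      · have hXkl : X.map k.hom ≫ X.map l.hom = 𝟙 _ := by
          rw [← X.map_comp, ← XMod.comp_hom, hkl, XMod.id_hom, X.map_id]
        simp [l, XMod.hom_comm k, P, reassoc_of% hXkl]
    inv_hom_id := congrArg XModHom.hom hkl }

lemma monoStr {F : XMod X} {N : C} (hF : IsFreeXModOn X F N) : XMod.monoStr X F := by
  have hstr : F.str = biprod.inr ≫ hF.biprodIso.hom := (biprod.inr_desc _ _).symm
  rw [XMod.monoStr, hstr]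
  infer_instance

end Lambek

section Preadditive

variable [Preadditive C] [HasBinaryBiproducts C]

lemma injective_carrier [X.Additive] [X.PreservesInjectiveObjects] (hX : LocallyNilpotent X)
    {F : XMod X} {I : C} [Injective I] (hF : IsFreeXModOn X F I) : Injective F.carrier := by
  obtain ⟨n, hn⟩ := hX F.carrier
  suffices h : ∀ k ≤ n, Injective ((fpow X k).obj F.carrier) from h 0 n.zero_le
  intro k hk
  induction hk using Nat.decreasingInduction with
  | self => exact hn.injective
  | of_succ k _ ih =>
    rw [fpow_succ_obj] at ih
    have := preservesBinaryBiproducts_of_preservesBiproducts (fpow X k)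
    exact .of_iso (((fpow X k).mapBiprod _ _).symm ≪≫ (fpow X k).mapIso hF.biprodIso) inferInstance

lemma exists_of_obj [X.Additive] {Q : XMod X} {N : C} (hQ : IsFreeXModOn X Q (X.obj N)) :
    ∃ F : XMod X, Nonempty (IsFreeXModOn X F N) := by
  let F : XMod X :=
    ⟨N ⊞ Q.carrier, (X.map biprod.fst ≫ hQ.unit + X.map biprod.snd ≫ Q.str) ≫ biprod.inr⟩
  have inl_str : X.map biprod.inl ≫ F.str = hQ.unit ≫ biprod.inr := by
    simp only [F, Preadditive.add_comp, Preadditive.comp_add, Category.assoc, ← X.map_comp_assoc,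
      biprod.inl_fst, biprod.inl_snd, X.map_id, X.map_zero, Category.id_comp, zero_comp, add_zero]
  have inr_str : X.map biprod.inr ≫ F.str = Q.str ≫ biprod.inr := by
    simp only [F, Preadditive.add_comp, Preadditive.comp_add, Category.assoc, ← X.map_comp_assoc,
      biprod.inr_fst, biprod.inr_snd, X.map_id, X.map_zero, Category.id_comp, zero_comp, zero_add]
  have str_desc (P : XMod X) (g : N ⟶ P.carrier) :
      F.str ≫ biprod.desc g (hQ.lift P (X.map g ≫ P.str)).hom =
        X.map (biprod.desc g (hQ.lift P (X.map g ≫ P.str)).hom) ≫ P.str := by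
    simp only [F, Category.assoc, biprod.inr_desc, Preadditive.add_comp, hQ.fac, XMod.hom_comm]
    rw [biprod.desc_eq]
    simp [Preadditive.add_comp]
  refine ⟨F, ⟨{
    unit := biprod.inl
    lift := fun P g ↦ ⟨biprod.desc g (hQ.lift P (X.map g ≫ P.str)).hom, str_desc P g⟩
    fac := fun P g ↦ biprod.inl_desc _ _
    uniq := fun P g k hk ↦ XMod.hom_ext (biprod.hom_ext' _ _ (by simpa using hk) ?_) }⟩⟩
  let r : Q ⟶ F := ⟨biprod.inr, inr_str.symm⟩
  have hr : r ≫ k = hQ.lift P (X.map g ≫ P.str) := by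
    refine hQ.uniq _ _ _ ?_
    rw [XMod.comp_hom, ← Category.assoc, ← inl_str, Category.assoc, XMod.hom_comm,
      ← X.map_comp_assoc, hk]
  simpa using congrArg XModHom.hom hr

theorem exists_of_isZero_fpow_obj [X.Additive] {n : ℕ} {N : C} (hN : IsZero ((fpow X n).obj N)) :
    ∃ F : XMod X, Nonempty (IsFreeXModOn X F N) := by
  induction n generalizing N with
  | zero =>
    replace hN : IsZero N := hN
    exact ⟨⟨N, 0⟩, ⟨{
      unit := 𝟙 N
      lift := fun P _ ↦ ⟨0, by simp⟩
      fac := fun P _ ↦ hN.eq_of_src _ _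
      uniq := fun P _ _ _ ↦ XMod.hom_ext (hN.eq_of_src _ _) }⟩⟩
  | succ n ih =>
    obtain ⟨F, ⟨hF⟩⟩ := ih (fpow_succ_obj X n N ▸ hN)
    exact hF.exists_of_obj

end Preadditive

end IsFreeXModOn

namespace XMod

variable {X : C ⥤ C}

lemma isRightAdjoint_forget (h : ∀ N, ∃ F : XMod X, Nonempty (IsFreeXModOn X F N)) :
    (forget X).IsRightAdjoint := by
  have (N : C) : HasInitial (StructuredArrow N (forget X)) := by
    obtain ⟨F, ⟨hF⟩⟩ := h N
    exact (IsInitial.ofUniqueHom (X := StructuredArrow.mk (S := N) (T := forget X) hF.unit)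
      (fun P ↦ StructuredArrow.homMk (hF.lift _ P.hom) (hF.fac _ _))
      (fun P k ↦ StructuredArrow.hom_ext _ _ (hF.uniq _ _ _ (StructuredArrow.w k)))).hasInitial
  exact isRightAdjointOfStructuredArrowInitials (forget X)

lemma epi_hom [Abelian C] [X.PreservesZeroMorphisms] [PreservesFiniteColimits X] {M N : XMod X}
    (f : M ⟶ N) [Epi f] : Epi f.hom := by
  obtain ⟨s, hs⟩ := exists_map_g_comp_eq X
    (ShortComplex.exact_of_g_is_cokernel (.mk _ _ (cokernel.condition f.hom))
      (cokernelIsCokernel f.hom)) (N.str ≫ cokernel.π f.hom)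
    (by simp [← reassoc_of% hom_comm f])
  let Q : XMod X := ⟨cokernel f.hom, s⟩
  let π : N ⟶ Q := ⟨cokernel.π f.hom, hs.symm⟩
  let z : N ⟶ Q := ⟨0, by simp⟩
  have hπz : π = z := by
    rw [← cancel_epi f]
    exact hom_ext ((cokernel.condition f.hom).trans comp_zero.symm)
  exact Abelian.epi_of_cokernel_π_eq_zero _ (congrArg XModHom.hom hπz)

instance [Abelian C] [X.PreservesZeroMorphisms] [PreservesFiniteColimits X] :
    (forget X).PreservesEpimorphisms where
  preserves f _ := epi_hom f

lemma shortExact_map_forget [Abelian C] [X.PreservesZeroMorphisms] [PreservesFiniteColimits X]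
    [Abelian (XMod X)] [(forget X).IsRightAdjoint] {S : ShortComplex (XMod X)}
    (hS : S.ShortExact) : (S.map (forget X)).ShortExact := by
  have := hS.mono_f
  have := hS.epi_g
  exact .mk' (hS.exact.map_of_mono_of_preservesKernel (forget X) inferInstance inferInstance)
    (inferInstanceAs (Mono ((forget X).map S.f))) (inferInstanceAs (Epi ((forget X).map S.g)))

section Defect

variable [Preadditive C] [X.Additive]

/-- The obstruction to the `X`-linearity of a morphism of the base category between the carriers
of two `X`-modules. -/
@[simps]
def defect (M N : XMod X) : (M.carrier ⟶ N.carrier) →+ (X.obj M.carrier ⟶ N.carrier) where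
  toFun φ := M.str ≫ φ - X.map φ ≫ N.str
  map_zero' := by simp
  map_add' φ ψ := by
    simp only [Preadditive.comp_add, X.map_add, Preadditive.add_comp]
    abel

lemma defect_hom {M N : XMod X} (f : M ⟶ N) : defect M N f.hom = 0 :=
  sub_eq_zero.2 (hom_comm f)

lemma defect_hom_comp {M N P : XMod X} (f : M ⟶ N) (φ : N.carrier ⟶ P.carrier) :
    defect M P (f.hom ≫ φ) = X.map f.hom ≫ defect N P φ := by
  simp [reassoc_of% hom_comm f]

/-- The iterated structure map `X^k F ⟶ F` of an `X`-module `F`. -/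
def iterStr (F : XMod X) : ∀ k : ℕ, (fpow X k).obj F.carrier ⟶ F.carrier
  | 0 => 𝟙 _
  | k + 1 => X.map (iterStr F k) ≫ F.str

lemma exists_defect_eq_comp {M F : XMod X} (hM : monoStr X M) {J : C} [Injective J]
    (a : J ⟶ F.carrier)
    (h : ∀ ρ : X.obj M.carrier ⟶ X.obj J, ∃ φ, defect M F φ = ρ ≫ X.map a ≫ F.str)
    (ρ : X.obj M.carrier ⟶ J) : ∃ φ, defect M F φ = ρ ≫ a := by
  have : Mono M.str := hM
  let χ := Injective.factorThru ρ M.str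
  have hχ : defect M F (χ ≫ a) = ρ ≫ a - X.map χ ≫ X.map a ≫ F.str := by simp [χ]
  obtain ⟨φ, hφ⟩ := h (X.map χ)
  exact ⟨χ ≫ a + φ, by rw [map_add, hχ, hφ, sub_add_cancel]⟩

lemma defect_surjective [X.PreservesInjectiveObjects] (hX : LocallyNilpotent X) {M F : XMod X}
    (hM : monoStr X M) [Injective F.carrier] : Function.Surjective (defect M F) := by
  obtain ⟨n, hn⟩ := hX F.carrier
  have exists_defect_eq (k : ℕ) (hk : k ≤ n) : ∀ ρ : X.obj M.carrier ⟶ (fpow X k).obj F.carrier,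
      ∃ φ, defect M F φ = ρ ≫ iterStr F k := by
    induction hk using Nat.decreasingInduction with
    | self => exact fun ρ ↦ ⟨0, by rw [map_zero, hn.eq_of_tgt ρ 0, zero_comp]⟩
    | of_succ k _ ih => exact exists_defect_eq_comp hM (iterStr F k) ih
  intro ψ
  obtain ⟨φ, hφ⟩ := exists_defect_eq 0 n.zero_le ψ
  exact ⟨φ, hφ.trans (Category.comp_id ψ)⟩

end Defect

lemma exists_extension [Abelian C] [X.Additive] [PreservesFiniteColimits X]
    [X.PreservesInjectiveObjects] (hX : LocallyNilpotent X) [Abelian (XMod X)]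
    [(forget X).IsRightAdjoint] {S : ShortComplex (XMod X)} (hS : S.ShortExact)
    (hS₃ : monoStr X S.X₃) {F : XMod X} [Injective F.carrier] (g : S.X₁ ⟶ F) :
    ∃ h : S.X₂ ⟶ F, S.f ≫ h = g := by
  have hS' := shortExact_map_forget hS
  have : Mono S.f.hom := hS'.mono_f
  have : Epi (S.map (forget X)).g := hS'.epi_g
  let h := Injective.factorThru g.hom S.f.hom
  have hh : S.f.hom ≫ h = g.hom := Injective.comp_factorThru _ _
  obtain ⟨ψ, hψ⟩ : ∃ ψ, X.map S.g.hom ≫ ψ = defect _ F h :=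
    exists_map_g_comp_eq X hS'.exact _
      ((defect_hom_comp S.f h).symm.trans ((congrArg _ hh).trans (defect_hom g)))
  obtain ⟨φ, rfl⟩ := defect_surjective hX hS₃ ψ
  have hdefect : defect _ F (h - S.g.hom ≫ φ) = 0 := by
    rw [map_sub, defect_hom_comp, hψ, sub_self]
  have hfg : S.f.hom ≫ S.g.hom = 0 := (S.map (forget X)).zero
  refine ⟨⟨h - S.g.hom ≫ φ, sub_eq_zero.1 hdefect⟩, hom_ext ?_⟩
  change S.f.hom ≫ (h - S.g.hom ≫ φ) = g.hom
  rw [Preadditive.comp_sub, hh, reassoc_of% hfg, zero_comp, sub_zero]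

end XMod

theorem ext_vanishing_into_free_on_injective_general [Abelian C] {X : C ⥤ C}
    [PreservesFiniteLimits X] [PreservesFiniteColimits X] [X.PreservesInjectiveObjects]
    (hX : LocallyNilpotent X) [Abelian (XMod X)] [HasExt.{w} (XMod X)]
    (F : XMod X) [Injective F.carrier] (M : XMod X) (hM : Mono M.str) :
    ∀ i : ℕ, 0 < i → Subsingleton (Abelian.Ext M F i) := by
  rintro (_ | n) hn
  · exact absurd hn (lt_irrefl 0)
  have : X.Additive := X.additive_of_preserves_binary_products
  have exists_free (N : C) : ∃ G : XMod X, Nonempty (IsFreeXModOn X G N) :=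
    (hX N).elim fun _ ↦ IsFreeXModOn.exists_of_isZero_fpow_obj
  have := XMod.isRightAdjoint_forget exists_free
  refine subsingleton_ext_of_resolving (P := XMod.monoStr X) (fun N ↦ ?_) (fun S hS h₂ _ ↦ ?_)
    (fun S hS _ _ h₃ ↦ XMod.exists_extension hX hS h₃) hM n
  · obtain ⟨G, ⟨hG⟩⟩ := exists_free N.carrier
    exact ⟨G, hG.lift N (𝟙 _), hG.epi_lift_id N, hG.monoStr⟩
  · have : Mono S.f.hom := (XMod.shortExact_map_forget hS).mono_f
    exact XMod.monoStr_of_mono S.f h₂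

/-- Let `C` be abelian with enough injectives and `X` exact, locally
nilpotent and preserving injectives. If `I` is injective in `C` and `M ∈ Mono(X)`, then
`Ext^i(M, f₁(I)) = 0` for all `i > 0` in the Eilenberg–Moore category of the free monad.
In particular, `f₁(I)` is injective in the exact category `Mono(X)`. -/
theorem ext_vanishing_into_free_on_injective
    [Abelian C] [EnoughInjectives C] {X : C ⥤ C}
    [PreservesFiniteLimits X] [PreservesFiniteColimits X]
    (hX : LocallyNilpotent X)
    (hXinj : ∀ I : C, Injective I → Injective (X.obj I))
    [Abelian (XMod X)] [HasExt.{w} (XMod X)]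
    (I : C) (hI : Injective I) (F : XMod X) (hF : IsFreeXModOn X F I)
    (M : XMod X) (hM : Mono M.str) :
    ∀ i : ℕ, 0 < i → Subsingleton (Abelian.Ext M F i) := by
  have : X.Additive := X.additive_of_preserves_binary_products
  have : X.PreservesInjectiveObjects := ⟨hXinj _⟩
  have : Injective F.carrier := hF.injective_carrier hX
  exact ext_vanishing_into_free_on_injective_general hX F M hM
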